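/- Let n ≥ 4 and let φ : ℝⁿ → ℝⁿ be a continuous, non-degenerate coherency preserver for the form q(x₁,…,xₙ) = xₙ² − (x₁² + ⋯ + x_{n−1}²). Let Φ : ℝⁿ × 𝒬 → 𝒬 be any map satisfying φ(a + t·p) ∈ φ(a) + ℝ·Φ(a,p) for all a ∈ ℝⁿ, p ∈ 𝒬 and t ∈ ℝ. Then Φ is continuous (𝒬 carrying the subspace topology from ℝⁿ). -/

import Mathlib

/-!
Non-degeneracy forbids `φ` from being constant on a light line `a + ℝ p`: every point outside the
null hyperplane `a + p^⊥` is joined by a light line to some point of `a + ℝ p`, so if `φ` were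
constant on it with value `φ a`, all of these points would be sent into the cone `𝒞(φ a)`, and by
density and continuity so would all of `ℝⁿ` (`exists_ne_on_line`).

Given `(a₀, p₀)`, pick `t` with `φ (a₀ + t p₀) ≠ φ a₀`. The difference `v = φ (a + t p) - φ a`
is a multiple of `Φ(a, p)`, whose last coordinate is `1`, so `v = v_n Φ(a, p)`. Hence `v_n ≠ 0` at
`(a₀, p₀)`, so also nearby, and there `Φ(a, p) = v / v_n` is continuous in `(a, p)`.
-/

/-- The standard Minkowski quadratic form
`q(x₁,…,xₙ) = xₙ² − (x₁² + ⋯ + x_{n−1}²)` on `ℝⁿ`. -/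
noncomputable def mq (n : ℕ) (x : Fin n → ℝ) : ℝ :=
  ∑ i : Fin n, (if (i : ℕ) = n - 1 then (1 : ℝ) else -1) * x i ^ 2

/-- The set `𝒬 = {(x₁,…,x_{n−1},1) : x₁² + ⋯ + x_{n−1}² = 1}` in `ℝⁿ`. -/
def QSet (n : ℕ) : Set (Fin n → ℝ) :=
  {p | (∀ i : Fin n, (i : ℕ) = n - 1 → p i = 1) ∧
       (∑ i : Fin n, if (i : ℕ) = n - 1 then 0 else p i ^ 2) = 1}

/-- The symmetric bilinear form whose quadratic form is `mq n`. -/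
noncomputable def mB (n : ℕ) (x y : Fin n → ℝ) : ℝ :=
  ∑ i : Fin n, (if (i : ℕ) = n - 1 then (1 : ℝ) else -1) * (x i * y i)

lemma mq_sub_smul (n : ℕ) (x p : Fin n → ℝ) (t : ℝ) :
    mq n (x - t • p) = mq n x - 2 * t * mB n x p + t ^ 2 * mq n p := by
  simp only [mq, mB, Finset.mul_sum, ← Finset.sum_sub_distrib, ← Finset.sum_add_distrib]
  refine Finset.sum_congr rfl fun i _ => ?_
  simp only [Pi.sub_apply, Pi.smul_apply, smul_eq_mul]
  ring

lemma mq_continuous (n : ℕ) : Continuous (mq n) := by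
  unfold mq
  fun_prop

lemma mq_eq_zero_of_mem {n : ℕ} (hn : 0 < n) {p : Fin n → ℝ} (hp : p ∈ QSet n) :
    mq n p = 0 := by
  obtain ⟨h1, h2⟩ := hp
  have hlast : (∑ i : Fin n, if (i : ℕ) = n - 1 then (1 : ℝ) else 0) = 1 := by
    rw [Finset.sum_eq_single (⟨n - 1, by omega⟩ : Fin n)]
    · simp
    · intro i _ hi
      rw [if_neg]
      intro h
      exact hi (Fin.ext h)
    · simp
  have h : mq n p = (∑ i : Fin n, if (i : ℕ) = n - 1 then (1 : ℝ) else 0)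
      - ∑ i : Fin n, if (i : ℕ) = n - 1 then 0 else p i ^ 2 := by
    rw [mq, ← Finset.sum_sub_distrib]
    refine Finset.sum_congr rfl fun i _ => ?_
    split_ifs with hi
    · rw [h1 i hi]; norm_num
    · ring
  rw [h, hlast, h2, sub_self]

lemma mB_add_single {n : ℕ} (hn : 0 < n) {p : Fin n → ℝ} (hp : p ∈ QSet n)
    (x : Fin n → ℝ) (u : ℝ) :
    mB n (x + u • Pi.single (⟨n - 1, by omega⟩ : Fin n) 1) p = mB n x p + u := by
  have h : mB n (u • Pi.single (⟨n - 1, by omega⟩ : Fin n) 1) p = u := by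
    rw [mB, Finset.sum_eq_single (⟨n - 1, by omega⟩ : Fin n)]
    · simp [hp.1 ⟨n - 1, by omega⟩ rfl]
    · intro i _ hi
      simp [hi]
    · simp
  conv_rhs => rw [← h]
  simp only [mB, ← Finset.sum_add_distrib]
  refine Finset.sum_congr rfl fun i _ => ?_
  simp only [Pi.add_apply]
  ring

/-- A continuous non-degenerate coherency preserver is not constant on any light line. -/
lemma exists_ne_on_line {n : ℕ} (hn : 0 < n) {φ : (Fin n → ℝ) → (Fin n → ℝ)}
    (hcont : Continuous φ)
    (hpres : ∀ a b : Fin n → ℝ, mq n (b - a) = 0 → mq n (φ b - φ a) = 0)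
    (hnd : ¬ ∃ s' : Fin n → ℝ, ∀ x : Fin n → ℝ, mq n (φ x - s') = 0)
    (a : Fin n → ℝ) {p : Fin n → ℝ} (hp : p ∈ QSet n) :
    ∃ t : ℝ, φ (a + t • p) ≠ φ a := by
  by_contra! hconst
  refine hnd ⟨φ a, fun x => ?_⟩
  have key : ∀ y, mB n (y - a) p ≠ 0 → mq n (φ y - φ a) = 0 := by
    intro y hy
    -- `q(y - a - t p) = q(y - a) - 2 t B(y - a, p)` is affine in `t`; this is its root.
    have := hpres (a + (mq n (y - a) / (2 * mB n (y - a) p)) • p) y (by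
      rw [← sub_sub, mq_sub_smul, mq_eq_zero_of_mem hn hp]
      field_simp
      ring)
    rwa [hconst] at this
  -- Moving `x` along the time axis leaves the hyperplane `a + p^⊥` at all but one instant.
  set e : Fin n → ℝ := Pi.single (⟨n - 1, by omega⟩ : Fin n) 1 with he
  have hf : Continuous fun u : ℝ => mq n (φ (x + u • e) - φ a) :=
    (mq_continuous n).comp (by fun_prop)
  have h0 : (fun u : ℝ => mq n (φ (x + u • e) - φ a)) = fun _ => 0 := by
    refine hf.ext_on (dense_compl_singleton (-mB n (x - a) p)) continuous_const ?_
    intro u hu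
    refine key _ ?_
    rw [add_sub_right_comm, he, mB_add_single hn hp]
    intro h
    exact hu (by simpa using by linarith)
  simpa using congrFun h0 0

theorem induced_direction_map_is_continuous
    (n : ℕ) (hn : 4 ≤ n) (φ : (Fin n → ℝ) → (Fin n → ℝ))
    (hcont : Continuous φ)
    (hpres : ∀ a b : Fin n → ℝ, mq n (b - a) = 0 → mq n (φ b - φ a) = 0)
    (hnd : ¬ ∃ s' : Fin n → ℝ, ∀ x : Fin n → ℝ, mq n (φ x - s') = 0)
    (Φ : (Fin n → ℝ) → (Fin n → ℝ) → (Fin n → ℝ))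
    (hΦ : ∀ a : Fin n → ℝ, ∀ p ∈ QSet n, Φ a p ∈ QSet n ∧
       ∀ t : ℝ, ∃ s : ℝ, φ (a + t • p) = φ a + s • Φ a p) :
    ContinuousOn (fun x : (Fin n → ℝ) × (Fin n → ℝ) => Φ x.1 x.2)
      (Set.univ ×ˢ QSet n) := by
  rintro ⟨a₀, p₀⟩ ⟨-, hp₀⟩
  obtain ⟨t, ht⟩ := exists_ne_on_line (by omega) hcont hpres hnd a₀ hp₀
  let l : Fin n := ⟨n - 1, by omega⟩
  let v : (Fin n → ℝ) × (Fin n → ℝ) → (Fin n → ℝ) := fun x => φ (x.1 + t • x.2) - φ x.1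
  have hv : Continuous v := by fun_prop
  have hvl : Continuous fun x => v x l := by fun_prop
  have hvΦ : ∀ x : (Fin n → ℝ) × (Fin n → ℝ), x.2 ∈ QSet n → v x = v x l • Φ x.1 x.2 := by
    intro x hx
    obtain ⟨hQ, hs⟩ := hΦ x.1 x.2 hx
    obtain ⟨s, hs⟩ := hs t
    have h : v x = s • Φ x.1 x.2 := by simp [v, hs]
    have hl : v x l = s := by simp [h, hQ.1 l rfl]
    rw [hl, h]
  have hne : v (a₀, p₀) l ≠ 0 := by
    intro h
    have h' := hvΦ (a₀, p₀) hp₀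
    rw [h, zero_smul] at h'
    exact ht (sub_eq_zero.mp h')
  have hdiv : ∀ x : (Fin n → ℝ) × (Fin n → ℝ), x.2 ∈ QSet n → v x l ≠ 0 →
      Φ x.1 x.2 = (v x l)⁻¹ • v x := by
    intro x hx hx0
    rw [eq_inv_smul_iff₀ hx0]
    exact (hvΦ x hx).symm
  have hc : ContinuousWithinAt (fun x => (v x l)⁻¹ • v x) (Set.univ ×ˢ QSet n) (a₀, p₀) :=
    ((hvl.continuousAt.inv₀ hne).smul hv.continuousAt).continuousWithinAt
  refine hc.congr_of_eventuallyEq ?_ (hdiv _ hp₀ hne)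
  filter_upwards [self_mem_nhdsWithin,
    mem_nhdsWithin_of_mem_nhds (hvl.continuousAt.eventually_ne hne)] with x hx hx0
  exact hdiv x hx.2 hx0
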